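/- Fix N⋆ ∈ ℕ, let Λ = {k ∈ ℤ³ : k ≠ 0, |k_j| ≤ N⋆ for all j}, and let V be the real vector space of families u = (u_k)_{k∈Λ}, u_k ∈ ℂ³, satisfying u_{−k} = conj(u_k) and k · u_k = 0 for all k ∈ Λ. Define B by B_k(u) = −i ∑_{h,ℓ∈Λ, h+ℓ=k} (k·u_h)(u_ℓ − ((k·u_ℓ)/|k|²)k). Then B maps V into V (i.e. B(u) again satisfies the reality and incompressibility constraints for every u ∈ V), and B, viewed as a vector field on the finite-dimensional real vector space V, is divergence-free: for every u ∈ V, the trace of the derivative DB(u) : V → V is zero. -/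

import Mathlib

open scoped BigOperators

/-- The finite set `Λ = {k ∈ ℤ³ : k ≠ 0, |k_j| ≤ N⋆ for all j}` of retained Fourier modes. -/
noncomputable def eulerModes (Nstar : ℕ) : Finset (Fin 3 → ℤ) :=
  (Fintype.piFinset fun _ : Fin 3 => Finset.Icc (-(Nstar : ℤ)) (Nstar : ℤ)).filter (· ≠ 0)

/-- The pairing `k · v = ∑_j k_j v_j` of an integer wave vector with a complex vector. -/
noncomputable def eulerDot (k : Fin 3 → ℤ) (v : Fin 3 → ℂ) : ℂ := ∑ j, (k j : ℂ) * v j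

/-- The ambient space of families `(u_k)_{k ∈ Λ}` with `u_k ∈ ℂ³`. -/
abbrev EulerW (Nstar : ℕ) := {k : Fin 3 → ℤ // k ∈ eulerModes Nstar} → Fin 3 → ℂ

/-- The Galerkin–Euler vector field
`B_k(u) = -i ∑_{h+ℓ=k, h,ℓ∈Λ} (k·u_h)(u_ℓ - ((k·u_ℓ)/|k|²) k)` on `EulerW Nstar`. -/
noncomputable def eulerB (Nstar : ℕ) (u : EulerW Nstar) : EulerW Nstar := fun k j =>
  -Complex.I * ∑ h : {k : Fin 3 → ℤ // k ∈ eulerModes Nstar},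
    ∑ l : {k : Fin 3 → ℤ // k ∈ eulerModes Nstar},
      if (h : Fin 3 → ℤ) + (l : Fin 3 → ℤ) = (k : Fin 3 → ℤ) then
        eulerDot k (u h) *
          (u l j - eulerDot k (u l) / (∑ j', ((k : Fin 3 → ℤ) j' : ℂ) ^ 2) *
            ((k : Fin 3 → ℤ) j : ℂ))
      else 0

/-- The real vector space `V` of families satisfying the reality condition
`u_{-k} = conj (u_k)` and the incompressibility condition `k · u_k = 0`. -/
noncomputable def eulerV (Nstar : ℕ) : Submodule ℝ (EulerW Nstar) where
  carrier := {u |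
    (∀ (k : {k : Fin 3 → ℤ // k ∈ eulerModes Nstar})
        (hk : -(k : Fin 3 → ℤ) ∈ eulerModes Nstar),
      u ⟨-(k : Fin 3 → ℤ), hk⟩ = fun j => starRingEnd ℂ (u k j)) ∧
    ∀ k : {k : Fin 3 → ℤ // k ∈ eulerModes Nstar}, eulerDot k (u k) = 0}
  zero_mem' := by
    constructor
    · intro k hk; funext j; simp
    · intro k; simp [eulerDot]
  add_mem' := by
    rintro u v ⟨hu₁, hu₂⟩ ⟨hv₁, hv₂⟩
    constructor
    · intro k hk; funext j
      simp [hu₁ k hk, hv₁ k hk]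
    · intro k
      have : eulerDot k ((u + v) k) = eulerDot k (u k) + eulerDot k (v k) := by
        simp [eulerDot, mul_add, Finset.sum_add_distrib]
      rw [this, hu₂ k, hv₂ k, add_zero]
  smul_mem' := by
    rintro c u ⟨hu₁, hu₂⟩
    constructor
    · intro k hk; funext j
      simp [hu₁ k hk, Complex.real_smul]
    · intro k
      have : eulerDot k ((c • u) k) = (c : ℂ) * eulerDot k (u k) := by
        simp only [eulerDot, Pi.smul_apply, Complex.real_smul, Finset.mul_sum]
        exact Finset.sum_congr rfl fun j _ => by ring
      rw [this, hu₂ k, mul_zero]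

abbrev EulerL (N : ℕ) := {k : Fin 3 → ℤ // k ∈ eulerModes N}

theorem neg_mem_eulerModes {N : ℕ} {k : Fin 3 → ℤ} (hk : k ∈ eulerModes N) :
    -k ∈ eulerModes N := by
  simp only [eulerModes, Finset.mem_filter, Fintype.mem_piFinset, Finset.mem_Icc, Pi.neg_apply,
    ne_eq, neg_eq_zero] at *
  exact ⟨fun a => ⟨by linarith [(hk.1 a).2], by linarith [(hk.1 a).1]⟩, hk.2⟩

def eulerNeg (N : ℕ) : EulerL N ≃ EulerL N where
  toFun k := ⟨-k.1, neg_mem_eulerModes k.2⟩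
  invFun k := ⟨-k.1, neg_mem_eulerModes k.2⟩
  left_inv k := by simp
  right_inv k := by simp

theorem eulerDot_add (k : Fin 3 → ℤ) (u v : Fin 3 → ℂ) :
    eulerDot k (u + v) = eulerDot k u + eulerDot k v := by
  simp [eulerDot, mul_add, Finset.sum_add_distrib]

theorem eulerDot_smul (k : Fin 3 → ℤ) (c : ℂ) (v : Fin 3 → ℂ) :
    eulerDot k (fun j => c * v j) = c * eulerDot k v := by
  simp only [eulerDot, Finset.mul_sum]
  exact Finset.sum_congr rfl fun j _ => by ring

theorem eulerDot_rsmul (k : Fin 3 → ℤ) (c : ℝ) (v : Fin 3 → ℂ) :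
    eulerDot k (c • v) = c * eulerDot k v := eulerDot_smul k c v

theorem eulerDot_neg_conj (k : Fin 3 → ℤ) (v : Fin 3 → ℂ) :
    eulerDot (-k) (fun j => starRingEnd ℂ (v j)) = - starRingEnd ℂ (eulerDot k v) := by
  simp [eulerDot, Finset.sum_neg_distrib]

theorem eulerNormSq_ne {N : ℕ} (k : EulerL N) : (∑ j', ((k : Fin 3 → ℤ) j' : ℂ) ^ 2) ≠ 0 := by
  intro h
  have h' : (∑ j', ((k : Fin 3 → ℤ) j') ^ 2) = 0 := by exact_mod_cast h
  rw [Finset.sum_eq_zero_iff_of_nonneg (fun i _ => sq_nonneg _)] at h'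
  have := k.2
  simp only [eulerModes, Finset.mem_filter] at this
  apply this.2
  funext j
  simpa using h' j (Finset.mem_univ j)

theorem eulerB_mem {N : ℕ} (u : EulerW N) (hu : u ∈ eulerV N) : eulerB N u ∈ eulerV N := by
  obtain ⟨h1, h2⟩ := hu
  have h1' : ∀ k : EulerL N, u (eulerNeg N k) = fun j => starRingEnd ℂ (u k j) :=
    fun k => h1 k (neg_mem_eulerModes k.2)
  constructor
  · intro k hk
    funext j
    simp only [eulerB]
    rw [← (eulerNeg N).sum_comp]
    simp only [map_mul, map_neg, Complex.conj_I, neg_neg, map_sum]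
    rw [neg_mul, ← mul_neg, ← Finset.sum_neg_distrib]
    congr 1
    refine Finset.sum_congr rfl fun h _ => ?_
    rw [← (eulerNeg N).sum_comp, ← Finset.sum_neg_distrib]
    refine Finset.sum_congr rfl fun l _ => ?_
    have e : ((eulerNeg N h : Fin 3 → ℤ) + (eulerNeg N l : Fin 3 → ℤ) = -(k : Fin 3 → ℤ)) ↔
        (h : Fin 3 → ℤ) + (l : Fin 3 → ℤ) = (k : Fin 3 → ℤ) := by
      simp only [eulerNeg, Equiv.coe_fn_mk]
      rw [← neg_add, neg_inj]
    simp only [e, h1', eulerDot_neg_conj]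
    split_ifs
    · simp only [map_mul, map_sub, map_div₀, map_sum, map_pow, Pi.neg_apply, Int.cast_neg,
        map_intCast, neg_sq]
      ring
    · simp
  · intro k
    have key : ∀ l : EulerL N, ∑ j, ((k : Fin 3 → ℤ) j : ℂ) *
      (u l j - eulerDot k (u l) / (∑ j', ((k : Fin 3 → ℤ) j' : ℂ) ^ 2) *
            ((k : Fin 3 → ℤ) j : ℂ)) = 0 := by
      intro l
      have : ∀ j, ((k : Fin 3 → ℤ) j : ℂ) *
      (u l j - eulerDot k (u l) / (∑ j', ((k : Fin 3 → ℤ) j' : ℂ) ^ 2) *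
            ((k : Fin 3 → ℤ) j : ℂ)) = ((k : Fin 3 → ℤ) j : ℂ) * u l j -
            eulerDot k (u l) / (∑ j', ((k : Fin 3 → ℤ) j' : ℂ) ^ 2) *
            ((k : Fin 3 → ℤ) j : ℂ) ^ 2 := fun j => by ring
      simp only [this, Finset.sum_sub_distrib, ← Finset.mul_sum]
      rw [div_mul_cancel₀ _ (eulerNormSq_ne k)]
      simp [eulerDot]
    change ∑ j, _ = _
    simp only [eulerB, Finset.mul_sum]
    rw [Finset.sum_comm]
    refine Finset.sum_eq_zero fun h _ => ?_
    rw [Finset.sum_comm]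
    refine Finset.sum_eq_zero fun l _ => ?_
    split_ifs
    · rw [← mul_zero (-Complex.I * eulerDot k (u h)), ← key l, Finset.mul_sum]
      exact Finset.sum_congr rfl fun j _ => by ring
    · simp

noncomputable def eulerBil (N : ℕ) : EulerW N →ₗ[ℝ] EulerW N →ₗ[ℝ] EulerW N :=
  LinearMap.mk₂ ℝ (fun u v k j => -Complex.I * ∑ h : EulerL N, ∑ l : EulerL N,
      if (h : Fin 3 → ℤ) + (l : Fin 3 → ℤ) = (k : Fin 3 → ℤ) then
        eulerDot k (u h) *
          (v l j - eulerDot k (v l) / (∑ j', ((k : Fin 3 → ℤ) j' : ℂ) ^ 2) *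
            ((k : Fin 3 → ℤ) j : ℂ))
      else 0)
    (by
      intro u u' v; funext k j
      simp only [Pi.add_apply, eulerDot_add, ← mul_add, ← Finset.sum_add_distrib]
      congr 1
      refine Finset.sum_congr rfl fun h _ => Finset.sum_congr rfl fun l _ => ?_
      split_ifs <;> ring)
    (by
      intro c u v; funext k j
      simp only [Pi.smul_apply, eulerDot_rsmul, Complex.real_smul]
      rw [mul_left_comm]
      congr 1
      rw [Finset.mul_sum]
      refine Finset.sum_congr rfl fun h _ => ?_
      rw [Finset.mul_sum]
      refine Finset.sum_congr rfl fun l _ => ?_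
      split_ifs <;> ring)
    (by
      intro u v v'; funext k j
      simp only [Pi.add_apply, eulerDot_add, ← mul_add, ← Finset.sum_add_distrib]
      congr 1
      refine Finset.sum_congr rfl fun h _ => Finset.sum_congr rfl fun l _ => ?_
      split_ifs <;> ring)
    (by
      intro c u v; funext k j
      simp only [Pi.smul_apply, eulerDot_rsmul, Complex.real_smul]
      rw [mul_left_comm]
      congr 1
      rw [Finset.mul_sum]
      refine Finset.sum_congr rfl fun h _ => ?_
      rw [Finset.mul_sum]
      refine Finset.sum_congr rfl fun l _ => ?_
      split_ifs <;> ring)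

theorem eulerBil_diag (N : ℕ) (u : EulerW N) : eulerB N u = eulerBil N u u := rfl

theorem eulerB_fderiv (N : ℕ) (u v : EulerW N) :
    fderiv ℝ (eulerB N) u v = eulerBil N u v + eulerBil N v u := by
  let b : EulerW N →L[ℝ] EulerW N →L[ℝ] EulerW N :=
    LinearMap.toContinuousLinearMap
      ((LinearMap.toContinuousLinearMap (𝕜 := ℝ) (E := EulerW N) (F' := EulerW N)).toLinearMap ∘ₗ
        eulerBil N)
  have hb : ∀ x y, b x y = eulerBil N x y := fun x y => rfl
  have h := (b.hasFDerivAt (x := u)).clm_apply (hasFDerivAt_id u)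
  have e : eulerB N = fun y => b y (id y) := rfl
  rw [e, h.fderiv]
  simp [hb]

noncomputable def eulerMul (N : ℕ) (m : EulerL N → ℂ) : EulerW N →ₗ[ℝ] EulerW N where
  toFun u k j := m k * u k j
  map_add' u v := by funext k j; simp [mul_add]
  map_smul' c u := by funext k j; simp [mul_left_comm]

theorem eulerMul_mem {N : ℕ} (m : EulerL N → ℂ)
    (hm : ∀ k, m (eulerNeg N k) = starRingEnd ℂ (m k)) (u : EulerW N) (hu : u ∈ eulerV N) :
    eulerMul N m u ∈ eulerV N := by
  obtain ⟨h1, h2⟩ := hu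
  constructor
  · intro k hk
    funext j
    have := h1 k hk
    change m (eulerNeg N k) * u ⟨-(k : Fin 3 → ℤ), hk⟩ j = starRingEnd ℂ (m k * u k j)
    rw [hm, this, map_mul]
  · intro k
    change eulerDot k (fun j => m k * u k j) = 0
    rw [eulerDot_smul, h2, mul_zero]

theorem eulerB_mul {N : ℕ} (m : EulerL N → ℂ)
    (hm : ∀ h l k : EulerL N, (h : Fin 3 → ℤ) + l = k → m h * m l = m k) (u : EulerW N) :
    eulerB N (eulerMul N m u) = eulerMul N m (eulerB N u) := by
  funext k j
  change _ = m k * eulerB N u k j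
  have e : ∀ h, eulerMul N m u h = fun j => m h * u h j := fun h => rfl
  simp only [eulerB, e, eulerDot_smul]
  rw [mul_left_comm]
  congr 1
  rw [Finset.mul_sum]
  refine Finset.sum_congr rfl fun h _ => ?_
  rw [Finset.mul_sum]
  refine Finset.sum_congr rfl fun l _ => ?_
  split_ifs with hh
  · rw [← hm h l k hh]; ring
  · simp

theorem eulerQ_eq {N : ℕ} (u v : EulerW N) :
    eulerBil N u v + eulerBil N v u = eulerB N (u + v) - eulerB N u - eulerB N v := by
  simp only [eulerBil_diag, map_add, LinearMap.add_apply]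
  abel

theorem eulerQ_mem {N : ℕ} (u v : EulerW N) (hu : u ∈ eulerV N) (hv : v ∈ eulerV N) :
    eulerBil N u v + eulerBil N v u ∈ eulerV N := by
  rw [eulerQ_eq]
  exact sub_mem (sub_mem (eulerB_mem _ (add_mem hu hv)) (eulerB_mem _ hu)) (eulerB_mem _ hv)

noncomputable def eulerD (N : ℕ) : eulerV N →ₗ[ℝ] eulerV N →ₗ[ℝ] eulerV N :=
  LinearMap.mk₂ ℝ (fun u v => ⟨eulerBil N u v + eulerBil N v u, eulerQ_mem _ _ u.2 v.2⟩)
    (by intro u u' v; ext1; simp only [Submodule.coe_add, map_add, LinearMap.add_apply]; abel)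
    (by intro c u v; ext1; simp)
    (by intro u v v'; ext1; simp only [Submodule.coe_add, map_add, LinearMap.add_apply]; abel)
    (by intro c u v; ext1; simp)

theorem eulerD_trace_mul {N : ℕ} (m m' : EulerL N → ℂ)
    (hm : ∀ k, m (eulerNeg N k) = starRingEnd ℂ (m k))
    (hm' : ∀ k, m' (eulerNeg N k) = starRingEnd ℂ (m' k))
    (hmm : ∀ k, m k * m' k = 1)
    (hadd : ∀ h l k : EulerL N, (h : Fin 3 → ℤ) + l = k → m h * m l = m k) (w : eulerV N) :
    LinearMap.trace ℝ (eulerV N) (eulerD N ⟨eulerMul N m w, eulerMul_mem m hm w w.2⟩) =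
      LinearMap.trace ℝ (eulerV N) (eulerD N w) := by
  let T : eulerV N →ₗ[ℝ] eulerV N := (eulerMul N m).restrict (eulerMul_mem m hm)
  let T' : eulerV N →ₗ[ℝ] eulerV N := (eulerMul N m').restrict (eulerMul_mem m' hm')
  have h1 : T * T' = 1 := by
    ext x k j : 4
    change m k * (m' k * x.1 k j) = x.1 k j
    rw [← mul_assoc, hmm, one_mul]
  have h2 : T' * T = 1 := by
    ext x k j : 4
    change m' k * (m k * x.1 k j) = x.1 k j
    rw [← mul_assoc, mul_comm (m' k), hmm, one_mul]
  have h3 : eulerD N (T w) * T = T * eulerD N w := by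
    ext1 x
    apply Subtype.ext
    change eulerBil N (eulerMul N m w) (eulerMul N m x) + eulerBil N (eulerMul N m x) (eulerMul N m w)
      = eulerMul N m (eulerBil N w x + eulerBil N x w)
    rw [eulerQ_eq, eulerQ_eq, map_sub, map_sub, ← map_add, eulerB_mul m hadd, eulerB_mul m hadd,
      eulerB_mul m hadd]
  change LinearMap.trace ℝ (eulerV N) (eulerD N (T w)) = _
  have h4 : eulerD N (T w) = (T * eulerD N w) * T' := by
    rw [← h3, mul_assoc, h1, mul_one]
  rw [h4, LinearMap.trace_mul_comm, ← mul_assoc, h2, one_mul]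

def eulerTheta (N : ℕ) : (Fin 3 → ℤ) →+ ℤ where
  toFun k := k 0 + (2 * N + 1) * (k 1 + (2 * N + 1) * k 2)
  map_zero' := by simp
  map_add' a b := by simp; ring

theorem euler_digit (N : ℕ) (a b : ℤ) (h1 : -(N : ℤ) ≤ a) (h2 : a ≤ N)
    (h : a + (2 * N + 1) * b = 0) : a = 0 ∧ b = 0 := by
  have hb : b = 0 := by
    rcases lt_trichotomy b 0 with hb | hb | hb
    · nlinarith
    · exact hb
    · nlinarith
  subst hb
  simpa using h

theorem eulerTheta_ne {N : ℕ} (k : EulerL N) : eulerTheta N k ≠ 0 := by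
  intro h
  have hk := k.2
  simp only [eulerModes, Finset.mem_filter, Fintype.mem_piFinset, Finset.mem_Icc] at hk
  obtain ⟨a, b⟩ := euler_digit N _ _ (hk.1 0).1 (hk.1 0).2 h
  obtain ⟨b, c⟩ := euler_digit N _ _ (hk.1 1).1 (hk.1 1).2 b
  apply hk.2
  funext j
  fin_cases j <;> assumption

noncomputable def eulerChar (N : ℕ) (k : Fin 3 → ℤ) : ℂ :=
  Complex.exp ((eulerTheta N k : ℂ) * Complex.I)

theorem eulerChar_add (N : ℕ) (h l : Fin 3 → ℤ) :
    eulerChar N (h + l) = eulerChar N h * eulerChar N l := by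
  simp only [eulerChar, map_add, ← Complex.exp_add]
  congr 1; push_cast; ring

theorem eulerChar_conj (N : ℕ) (k : Fin 3 → ℤ) :
    eulerChar N (-k) = starRingEnd ℂ (eulerChar N k) := by
  simp [eulerChar, ← Complex.exp_conj]

theorem eulerChar_ne_one {N : ℕ} (k : EulerL N) : eulerChar N k - 1 ≠ 0 := by
  intro h
  rw [sub_eq_zero, eulerChar, Complex.exp_eq_one_iff] at h
  obtain ⟨n, hn⟩ := h
  have h2 : (eulerTheta N k : ℂ) = (n * 2 : ℤ) * (Real.pi : ℂ) := by
    apply mul_right_cancel₀ Complex.I_ne_zero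
    rw [hn]; push_cast; ring
  have h3 : (eulerTheta N k : ℝ) = (n * 2 : ℤ) * Real.pi := by exact_mod_cast h2
  by_cases h0 : n * 2 = 0
  · rw [h0] at h3
    exact eulerTheta_ne k (by simpa using h3)
  · exact (irrational_pi.intCast_mul h0).ne_int _ h3.symm

theorem eulerD_trace {N : ℕ} (u : eulerV N) :
    LinearMap.trace ℝ (eulerV N) (eulerD N u) = 0 := by
  have hc : ∀ k : EulerL N, eulerChar N (eulerNeg N k) = starRingEnd ℂ (eulerChar N k) :=
    fun k => eulerChar_conj N k
  have hi : ∀ k : EulerL N, (fun k : EulerL N => (eulerChar N k - 1)⁻¹) (eulerNeg N k) =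
      starRingEnd ℂ ((fun k : EulerL N => (eulerChar N k - 1)⁻¹) k) := by
    intro k
    simp only [hc, map_inv₀, map_sub, map_one]
  obtain ⟨w, hw⟩ : ∃ w : eulerV N, ∀ k j, w.1 k j = (eulerChar N k - 1)⁻¹ * u.1 k j :=
    ⟨⟨_, eulerMul_mem _ hi u u.2⟩, fun k j => rfl⟩
  have key := eulerD_trace_mul (fun k : EulerL N => eulerChar N k)
    (fun k : EulerL N => eulerChar N (-k)) hc
    (fun k => eulerChar_conj N (-k))
    (fun k => by
      rw [← eulerChar_add]; simp [eulerChar])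
    (fun h l k e => by rw [← e, eulerChar_add]) w
  have hu : u = (⟨eulerMul N (fun k : EulerL N => eulerChar N k) w,
      eulerMul_mem (fun k : EulerL N => eulerChar N k) hc w w.2⟩ : eulerV N) - w := by
    apply Subtype.ext
    funext k j
    change u.1 k j = eulerChar N k * w.1 k j - w.1 k j
    rw [hw]
    have := eulerChar_ne_one k
    field_simp
  rw [hu, map_sub, map_sub, key, sub_self]

/-- **The Galerkin–Euler vector field preserves the constraint space and is
divergence-free.** `B` maps `V` into `V`, and for every `u ∈ V` the derivative
`DB(u) : V → V` has zero trace. -/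
theorem galerkin_euler_divergence_free (Nstar : ℕ) :
    (∀ u ∈ eulerV Nstar, eulerB Nstar u ∈ eulerV Nstar) ∧
      ∀ u ∈ eulerV Nstar,
        ∃ hmap : ∀ v ∈ eulerV Nstar, fderiv ℝ (eulerB Nstar) u v ∈ eulerV Nstar,
          LinearMap.trace ℝ (eulerV Nstar)
            ((fderiv ℝ (eulerB Nstar) u).toLinearMap.restrict hmap) = 0 := by
  refine ⟨eulerB_mem, fun u hu => ⟨fun v hv => ?_, ?_⟩⟩
  · rw [eulerB_fderiv]
    exact eulerQ_mem u v hu hv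
  · rw [← eulerD_trace ⟨u, hu⟩]
    congr 1
    ext1 v
    apply Subtype.ext
    exact eulerB_fderiv Nstar u v
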